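/- For N qubits, a graph E on the qubit indices, and any qubit index k, the CZ layer conjugation identity CZ_E · X_k · CZ_E = X_k · ∏_{l ∈ N(k)} Z_l holds, where N(k) is the set of neighbors of k in E. -/

import Mathlib

open Matrix NormedSpace

namespace Qubits

noncomputable section

/-- N-qubit basis states. -/
abbrev QState (N : ℕ) := Fin N → Fin 2

/-- Operators on the N-qubit Hilbert space (dimension `2^N`). -/
abbrev QOp (N : ℕ) := Matrix (QState N) (QState N) ℂ

/-- Pauli X. -/
def pX : Matrix (Fin 2) (Fin 2) ℂ := !![0, 1; 1, 0]

/-- Pauli Y. -/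
def pY : Matrix (Fin 2) (Fin 2) ℂ := !![0, -Complex.I; Complex.I, 0]

/-- Pauli Z. -/
def pZ : Matrix (Fin 2) (Fin 2) ℂ := !![1, 0; 0, -1]

/-- The single-qubit operator `M` acting on qubit `k` and as the identity on all other qubits. -/
def onQubit {N : ℕ} (M : Matrix (Fin 2) (Fin 2) ℂ) (k : Fin N) : QOp N :=
  Matrix.of fun x y => if ∀ j, j ≠ k → x j = y j then M (x k) (y k) else 0

/-- The product `∏_{j ∈ S} f j` of matrices over a finite set of qubit indices, taken in
increasing order of the index (the factors we use always commute pairwise). -/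
def prodOver {N : ℕ} (S : Finset (Fin N)) (f : Fin N → QOp N) : QOp N :=
  ((S.sort (· ≤ ·)).map f).prod

/-- The CZ layer of a graph `G` on the qubit indices: the diagonal matrix whose entry at the
basis state `x` is `(-1)^(Σ_{{j,j'} ∈ E} x_j·x_{j'})`. -/
def czLayer {N : ℕ} (G : SimpleGraph (Fin N)) [DecidableRel G.Adj] : QOp N :=
  Matrix.diagonal fun x =>
    (-1 : ℂ) ^ ∑ e ∈ G.edgeFinset,
      Sym2.lift ⟨fun j j' => (x j : ℕ) * (x j' : ℕ), fun _ _ => Nat.mul_comm _ _⟩ e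

end

end Qubits

open Matrix Qubits

/-!
`X_k` permutes the basis states by flipping bit `k`, so moving it to the left past the diagonal
matrix `CZ_E` flips bit `k` in the exponent of the phase. That exponent is the quadratic form
`Q(x) = ∑_{{i, j} ∈ E} x_i x_j`, which splits as `x_k ∑_{l ∈ N(k)} x_l` plus a part free of `x_k`.
When the exponents of a state and its flip are added, the free part appears twice and drops out of
the sign, leaving `∑_{l ∈ N(k)} x_l`, the exponent of `∏_{l ∈ N(k)} Z_l`.
-/

namespace Qubits

section EdgeForm

variable {V : Type*}

theorem sum_incidenceFinset_eq_sum_neighborFinset {M : Type*} [AddCommMonoid M] [DecidableEq V]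
    (G : SimpleGraph V) (k : V) [Fintype (G.neighborSet k)] (f : Sym2 V → M) :
    ∑ e ∈ G.incidenceFinset k, f e = ∑ l ∈ G.neighborFinset k, f s(k, l) := by
  have image_neighbors :
      (G.neighborFinset k).image (fun l => s(k, l)) = G.incidenceFinset k := by
    ext e
    simp only [Finset.mem_image, SimpleGraph.mem_neighborFinset, SimpleGraph.mem_incidenceFinset]
    constructor
    · rintro ⟨l, hl, rfl⟩
      exact G.mk'_mem_incidenceSet_left_iff.2 hl
    · rintro ⟨he, l, rfl⟩
      exact ⟨l, he, rfl⟩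
  rw [← image_neighbors, Finset.sum_image fun _ _ _ _ h => Sym2.congr_right.1 h]

variable {R : Type*} [CommSemiring R]

/-- The quadratic form `∑_{{i, j} ∈ E} x_i x_j` of a graph. Evaluated at the bits of a basis state,
it is the exponent of `-1` in the corresponding diagonal entry of the CZ layer. -/
def edgeForm (G : SimpleGraph V) [Fintype G.edgeSet] (x : V → R) : R :=
  ∑ e ∈ G.edgeFinset, (e.map x).mul

theorem edgeForm_congr (G : SimpleGraph V) [Fintype G.edgeSet] {x y : V → R}
    (h : ∀ i ∈ G.support, x i = y i) : edgeForm G x = edgeForm G y := by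
  refine Finset.sum_congr rfl fun e he => ?_
  induction e with
  | _ i j =>
    have hij : G.Adj i j := G.mem_edgeSet.1 (SimpleGraph.mem_edgeFinset.1 he)
    simp only [Sym2.map_mk, Sym2.mul_mk, h i ⟨j, hij⟩, h j ⟨i, hij.symm⟩]

variable [Fintype V] [DecidableEq V] (G : SimpleGraph V) [DecidableRel G.Adj] (k : V)

theorem edgeForm_eq_mul_sum_add_deleteIncidenceSet (x : V → R) :
    edgeForm G x =
      x k * ∑ l ∈ G.neighborFinset k, x l + edgeForm (G.deleteIncidenceSet k) x := by
  rw [edgeForm, edgeForm, SimpleGraph.edgeFinset_deleteIncidenceSet_eq_sdiff, add_comm,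
    Finset.mul_sum, ← Finset.sum_sdiff (G.incidenceFinset_subset k),
    sum_incidenceFinset_eq_sum_neighborFinset]
  rfl

theorem edgeForm_deleteIncidenceSet_congr {x y : V → R} (h : ∀ l ≠ k, x l = y l) :
    edgeForm (G.deleteIncidenceSet k) x = edgeForm (G.deleteIncidenceSet k) y :=
  edgeForm_congr _ fun i hi => h i (G.support_deleteIncidenceSet_subset k hi).2

theorem edgeForm_add_edgeForm_of_eq_off {x y : V → R} (h : ∀ l ≠ k, x l = y l) :
    edgeForm G x + edgeForm G y =
      (x k + y k) * ∑ l ∈ G.neighborFinset k, y l + 2 * edgeForm (G.deleteIncidenceSet k) y := by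
  have neighbors_eq : ∑ l ∈ G.neighborFinset k, x l = ∑ l ∈ G.neighborFinset k, y l :=
    Finset.sum_congr rfl fun l hl => h l ((G.mem_neighborFinset k l).1 hl).ne'
  rw [edgeForm_eq_mul_sum_add_deleteIncidenceSet G k x,
    edgeForm_eq_mul_sum_add_deleteIncidenceSet G k y, neighbors_eq,
    edgeForm_deleteIncidenceSet_congr G k h]
  ring

end EdgeForm

theorem diagonal_mul_permMatrix {n R : Type*} [Fintype n] [DecidableEq n] [NonAssocSemiring R]
    (d : n → R) (σ : Equiv.Perm n) :
    diagonal d * σ.permMatrix R = σ.permMatrix R * diagonal (d ∘ σ.symm) := by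
  ext i j
  by_cases h : σ i = j
  · simp [← h]
  · simp [PEquiv.toMatrix_apply, h]

variable {N : ℕ}

theorem prodOver_map {M : Type*} [CommMonoid M] (φ : M →* QOp N) (S : Finset (Fin N))
    (f : Fin N → M) : prodOver S (fun l => φ (f l)) = φ (∏ l ∈ S, f l) := by
  have prod_sort : ((S.sort (· ≤ ·)).map f).prod = ∏ l ∈ S, f l := by
    rw [← List.prod_toFinset f (S.sort_nodup _), S.sort_toFinset]
  rw [prodOver, ← prod_sort, map_list_prod, List.map_map]
  rfl

theorem prodOver_diagonal (S : Finset (Fin N)) (d : Fin N → QState N → ℂ) :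
    prodOver S (fun l => diagonal (d l)) = diagonal (∏ l ∈ S, d l) :=
  prodOver_map (diagonalRingHom (QState N) ℂ).toMonoidHom S d

theorem onQubit_diagonal (d : Fin 2 → ℂ) (k : Fin N) :
    onQubit (diagonal d) k = diagonal fun x => d (x k) := by
  ext x y
  have eq_iff : x = y ↔ (∀ j, j ≠ k → x j = y j) ∧ x k = y k := by
    grind
  simp only [onQubit, of_apply, diagonal_apply, eq_iff, ite_and]

/-- The permutation of the basis states that applies `σ` to bit `k` and fixes all other bits.
For `σ = (0 1)`, its matrix is `X_k`. -/
def permBit (σ : Equiv.Perm (Fin 2)) (k : Fin N) : Equiv.Perm (QState N) :=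
  Equiv.piCongrRight (Pi.mulSingle k σ)

theorem permBit_apply_same (σ : Equiv.Perm (Fin 2)) (k : Fin N) (x : QState N) :
    permBit σ k x k = σ (x k) := by
  simp [permBit]

theorem permBit_apply_of_ne (σ : Equiv.Perm (Fin 2)) {k l : Fin N} (h : l ≠ k) (x : QState N) :
    permBit σ k x l = x l := by
  simp [permBit, h]

theorem permBit_symm (σ : Equiv.Perm (Fin 2)) (k : Fin N) :
    (permBit σ k).symm = permBit σ.symm k :=
  congrArg Equiv.piCongrRight (Pi.mulSingle_inv (f := fun _ => Equiv.Perm (Fin 2)) k σ).symm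

theorem permBit_apply_eq_iff (σ : Equiv.Perm (Fin 2)) (k : Fin N) (x y : QState N) :
    permBit σ k x = y ↔ (∀ j, j ≠ k → x j = y j) ∧ σ (x k) = y k := by
  constructor
  · rintro rfl
    exact ⟨fun j hj => (permBit_apply_of_ne σ hj x).symm, (permBit_apply_same σ k x).symm⟩
  · rintro ⟨eq_off, eq_at⟩
    funext j
    rcases eq_or_ne j k with rfl | hj
    · rw [permBit_apply_same, eq_at]
    · rw [permBit_apply_of_ne σ hj, eq_off j hj]

theorem onQubit_permMatrix (σ : Equiv.Perm (Fin 2)) (k : Fin N) :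
    onQubit (σ.permMatrix ℂ) k = (permBit σ k).permMatrix ℂ := by
  ext x y
  simp [onQubit, PEquiv.toMatrix_apply, permBit_apply_eq_iff, ite_and]

theorem pX_eq_permMatrix_swap : pX = (Equiv.swap 0 1).permMatrix ℂ := by
  ext i j
  fin_cases i <;> fin_cases j <;> simp [pX, PEquiv.toMatrix_apply]

theorem pZ_eq_diagonal : pZ = diagonal fun b : Fin 2 => (-1 : ℂ) ^ (b : ℕ) := by
  ext i j
  fin_cases i <;> fin_cases j <;> simp [pZ]

theorem onQubit_pX (k : Fin N) : onQubit pX k = (permBit (Equiv.swap 0 1) k).permMatrix ℂ := by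
  rw [pX_eq_permMatrix_swap, onQubit_permMatrix]

theorem onQubit_pZ (k : Fin N) : onQubit pZ k = diagonal fun x => (-1 : ℂ) ^ (x k : ℕ) := by
  rw [pZ_eq_diagonal, onQubit_diagonal]

theorem czLayer_eq_diagonal_edgeForm (G : SimpleGraph (Fin N)) [DecidableRel G.Adj] :
    czLayer G = diagonal fun x => (-1 : ℂ) ^ edgeForm G fun j => (x j : ℕ) := by
  refine congrArg diagonal (funext fun x => congrArg _ (Finset.sum_congr rfl fun e _ => ?_))
  induction e with
  | _ i j => rfl

theorem neg_one_pow_edgeForm_flip_mul (G : SimpleGraph (Fin N)) [DecidableRel G.Adj] (k : Fin N)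
    (x : QState N) :
    (-1 : ℂ) ^ (edgeForm G fun j => (permBit (Equiv.swap 0 1) k x j : ℕ)) *
        (-1) ^ (edgeForm G fun j => (x j : ℕ)) =
      ∏ l ∈ G.neighborFinset k, (-1) ^ (x l : ℕ) := by
  have bits_add_to_one : (permBit (Equiv.swap 0 1) k x k : ℕ) + (x k : ℕ) = 1 := by
    rw [permBit_apply_same]
    generalize x k = b
    fin_cases b <;> rfl
  rw [← pow_add, edgeForm_add_edgeForm_of_eq_off G k
    fun l hl => congrArg Fin.val (permBit_apply_of_ne _ hl x), bits_add_to_one, one_mul, pow_add,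
    Even.neg_one_pow (even_two_mul _), mul_one, Finset.prod_pow_eq_pow_sum]

end Qubits

/-- For N qubits, a graph E (as a simple graph on qubit indices) and any qubit
index k: CZ_E · X_k · CZ_E = X_k · ∏_{l ∈ N(k)} Z_l. -/
theorem stmt_8 {N : ℕ} (G : SimpleGraph (Fin N)) [DecidableRel G.Adj] (k : Fin N) :
    czLayer G * onQubit pX k * czLayer G =
      onQubit pX k * prodOver (G.neighborFinset k) (fun l => onQubit pZ l) := by
  have prod_Z : prodOver (G.neighborFinset k) (fun l => onQubit pZ l) =
      diagonal fun x => ∏ l ∈ G.neighborFinset k, (-1 : ℂ) ^ (x l : ℕ) := by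
    simp only [onQubit_pZ, prodOver_diagonal, Finset.prod_fn]
  rw [prod_Z, czLayer_eq_diagonal_edgeForm, onQubit_pX, diagonal_mul_permMatrix, mul_assoc,
    diagonal_mul_diagonal, permBit_symm, Equiv.symm_swap]
  simp only [Function.comp_apply, neg_one_pow_edgeForm_flip_mul]
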